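/- arXiv:0806.4064 — 4 statements merged into one kernel-verified Lean document; each statement's English description precedes it below -/
import Mathlib

section
/- Let p be a prime and let A₁ = ∏_{i∈I} ℤ/pℤ and A₂ = ∏_{j∈J} ℤ/pℤ be Cartesian powers of the cyclic group of order p, each equipped with the product topology (so each is a compact abelian group). Suppose there is an isomorphism of topological groups ψ : A₁ × Â₁ → A₂ × Â₂ which intertwines the standard bicharacters, i.e., e₂(ψ(u), ψ(v)) = e₁(u,v) for all u, v ∈ A₁ × Â₁, where eᵢ((x,χ),(x',χ')) = χ'(x)·χ(x')⁻¹. Then A₁ and A₂ are isomorphic as topological groups (equivalently, the index sets I and J have the same cardinality). -/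
/-!
The dual of `∏_I G` is the direct sum of `I` copies of `Ĝ`: the circle has no small subgroups, so a
character that is near `1` on the elements supported off a finite set of coordinates is trivial on
them. For finite `G ≠ 1` and infinite `I` the dual therefore has cardinality `|I|`.

If both index sets are finite, compare the orders `|G × Ĝ| ^ |I|` and `|G × Ĝ| ^ |J|` of the phase
spaces. If `J` is infinite, project the phase space of `∏_J G` to its discrete factor: the compact
group `∏_I G` has finite image there, so the dual of `∏_I G` must have at least `|J|` elements,
which forces `|J| ≤ |I|`. By symmetry, `|I| = |J|`.
-/

/-- The standard bicharacter on `A × Â`: `e ((x,χ),(x',χ')) = χ' x * (χ x')⁻¹`. -/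
noncomputable def stdBichar (A : Type*) [CommGroup A] [TopologicalSpace A] :
    (A × PontryaginDual A) → (A × PontryaginDual A) → Circle :=
  fun k l => l.2 k.1 * (k.2 l.1)⁻¹

theorem nonempty_embedding_of_finite_of_infinite (α β : Type*) [Finite α] [Infinite β] :
    Nonempty (α ↪ β) :=
  ⟨(Finite.equivFin α).toEmbedding.trans (Fin.valEmbedding.trans (Infinite.natEmbedding β))⟩

theorem nonempty_prod_embedding_of_finite (α β : Type*) [Finite α] [Infinite β] :
    Nonempty (α × β ↪ β) := by
  obtain ⟨ι⟩ := nonempty_embedding_of_finite_of_infinite α β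
  obtain ⟨e⟩ : Nonempty (β × β ≃ β) := by
    rw [← Cardinal.eq, Cardinal.mk_prod, Cardinal.lift_id,
      Cardinal.mul_eq_self (Cardinal.aleph0_le_mk β)]
  exact ⟨(ι.prodMap (.refl β)).trans e.toEmbedding⟩

theorem pontryaginDual_prod_apply {A ι : Type*} [Monoid A] [TopologicalSpace A] (F : Finset ι)
    (χ : ι → PontryaginDual A) (x : A) : (∏ i ∈ F, χ i) x = ∏ i ∈ F, χ i x :=
  map_prod (⟨⟨fun η => η x, rfl⟩, fun _ _ => rfl⟩ : PontryaginDual A →* Circle) χ F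

section CharactersOfProducts

variable {I : Type*} {G : I → Type*} [∀ i, TopologicalSpace (G i)]

theorem exists_finset_forall_character_eq_one [∀ i, Monoid (G i)] (χ : PontryaginDual (∀ i, G i)) :
    ∃ F : Finset I, ∀ x : ∀ i, G i, (∀ i ∈ F, x i = 1) → χ x = 1 := by
  have hopen : IsOpen (χ ⁻¹' Circle.centeredArc (Real.pi / 2)) :=
    (Circle.isOpen_centeredArc _).preimage (map_continuous χ)
  have hone : (1 : ∀ i, G i) ∈ χ ⁻¹' Circle.centeredArc (Real.pi / 2) := by
    rw [Set.mem_preimage, map_one, Circle.mem_centeredArc (by linarith [Real.pi_pos])]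
    simp [Real.pi_pos]
  obtain ⟨F, U, hU, hUχ⟩ := isOpen_pi_iff.1 hopen 1 hone
  refine ⟨F, fun x hx => Circle.eq_one_of_forall_pow_mem_centeredArc_pi_div_two fun n _ => ?_⟩
  rw [← map_pow]
  refine hUχ fun i hi => ?_
  simpa [hx i hi] using (hU i hi).2

variable [DecidableEq I] [∀ i, CommMonoid (G i)]

theorem exists_finset_character_eq_prod_mulSingle (χ : PontryaginDual (∀ i, G i)) :
    ∃ F : Finset I, ∀ x, χ x = ∏ i ∈ F, χ (Pi.mulSingle i (x i)) := by
  obtain ⟨F, hF⟩ := exists_finset_forall_character_eq_one χ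
  refine ⟨F, fun x => ?_⟩
  have hsplit : x = (∏ i ∈ F, Pi.mulSingle i (x i)) * F.piecewise (1 : ∀ i, G i) x := by
    ext j
    by_cases hj : j ∈ F <;> simp [Finset.prod_apply, Finset.prod_pi_mulSingle, hj]
  have hrest : χ (F.piecewise (1 : ∀ i, G i) x) = 1 := hF _ fun i hi => by simp [hi]
  conv_lhs => rw [hsplit, map_mul, hrest, mul_one, map_prod]

/-- The canonical homomorphism `⨁ i, Ĝ i → (∏ i, G i)^`, sending `χ` in the `i`-th summand to
`x ↦ χ (x i)`. Duals are written additively because direct sums are. -/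
noncomputable def directSumToDualPi :
    (DirectSum I fun i => Additive (PontryaginDual (G i))) →+
      Additive (PontryaginDual (∀ i, G i)) :=
  DirectSum.toAddMonoid fun i =>
    (PontryaginDual.map ⟨Pi.evalMonoidHom G i, continuous_apply i⟩).toMonoidHom.toAdditive

theorem directSumToDualPi_of_apply (i : I) (χ : PontryaginDual (G i)) (x : ∀ i, G i) :
    (directSumToDualPi (.of _ i (.ofMul χ))).toMul x = χ (x i) := by
  rw [directSumToDualPi, DirectSum.toAddMonoid_of]
  rfl

theorem directSumToDualPi_apply_mulSingle
    (f : DirectSum I fun i => Additive (PontryaginDual (G i))) (i : I) (a : G i) :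
    (directSumToDualPi f).toMul (Pi.mulSingle i a) = (f i).toMul a := by
  induction f using DirectSum.induction_on with
  | zero => simp
  | of j χ =>
    refine (directSumToDualPi_of_apply j χ.toMul _).trans ?_
    obtain rfl | hij := eq_or_ne i j
    · simp
    · simp [DirectSum.of_eq_of_ne _ _ _ hij, Pi.mulSingle_eq_of_ne hij.symm]
  | add f g hf hg =>
    rw [map_add, DirectSum.add_apply, toMul_add, toMul_add]
    exact congrArg₂ (· * ·) hf hg

theorem directSumToDualPi_injective : Function.Injective (directSumToDualPi (G := G)) := by
  intro f g hfg
  ext i a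
  have h := directSumToDualPi_apply_mulSingle f i a
  rw [hfg, directSumToDualPi_apply_mulSingle] at h
  exact congrArg _ h.symm

theorem directSumToDualPi_surjective : Function.Surjective (directSumToDualPi (G := G)) := by
  intro χ
  obtain ⟨F, hF⟩ := exists_finset_character_eq_prod_mulSingle χ.toMul
  let restrict (i : I) : PontryaginDual (G i) :=
    PontryaginDual.map ⟨MonoidHom.mulSingle G i, continuous_mulSingle i⟩ χ.toMul
  refine ⟨∑ i ∈ F, .of _ i (.ofMul (restrict i)), Additive.toMul.injective ?_⟩
  ext1 x
  calc (directSumToDualPi (∑ i ∈ F, .of _ i (.ofMul (restrict i)))).toMul x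
      = ∏ i ∈ F, (directSumToDualPi (.of _ i (.ofMul (restrict i)))).toMul x := by
        rw [map_sum, toMul_sum, pontryaginDual_prod_apply]
    _ = ∏ i ∈ F, χ.toMul (Pi.mulSingle i (x i)) :=
        Finset.prod_congr rfl fun i _ => directSumToDualPi_of_apply i (restrict i) x
    _ = χ.toMul x := (hF x).symm

/-- The dual of a product is the direct sum of the duals. -/
noncomputable def directSumEquivDualPi :
    (DirectSum I fun i => Additive (PontryaginDual (G i))) ≃+
      Additive (PontryaginDual (∀ i, G i)) :=
  .ofBijective directSumToDualPi ⟨directSumToDualPi_injective, directSumToDualPi_surjective⟩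

end CharactersOfProducts

/-- The phase space `A × Â` of a topological group with position space `A`. -/
abbrev PhaseSpace (A : Type*) [Monoid A] [TopologicalSpace A] : Type _ :=
  A × PontryaginDual A

section DualOfPower

variable {I : Type*} {G : Type*} [TopologicalSpace G]

theorem card_phaseSpace_pi [Finite I] [CommMonoid G] :
    Nat.card (PhaseSpace (I → G)) = Nat.card (PhaseSpace G) ^ Nat.card I := by
  classical
  have := Fintype.ofFinite I
  have hdual : Nat.card (PontryaginDual (I → G)) = Nat.card (PontryaginDual G) ^ Nat.card I := by
    rw [← Nat.card_fun]
    exact Nat.card_congr <| Additive.ofMul.trans <|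
      (directSumEquivDualPi (G := fun _ : I => G)).symm.toEquiv.trans
        (DirectSum.addEquivProd _).toEquiv
  rw [Nat.card_prod, Nat.card_prod, hdual, Nat.card_fun, mul_pow]

theorem nonempty_dual_pi_equiv_index [Infinite I] [CommMonoid G] [Finite (PontryaginDual G)]
    [Nontrivial (PontryaginDual G)] : Nonempty (PontryaginDual (I → G) ≃ I) := by
  classical
  have hcard : Nonempty ((I →₀ Additive (PontryaginDual G)) ≃ I) := by
    rw [← Cardinal.lift_mk_eq', Cardinal.mk_finsupp_lift_of_infinite, max_eq_left]
    · exact Cardinal.lift_lift _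
    · exact Cardinal.lift_mk_le'.2 (nonempty_embedding_of_finite_of_infinite _ I)
  exact hcard.map fun e => Additive.ofMul.trans <|
    (directSumEquivDualPi (G := fun _ : I => G)).symm.toEquiv.trans <|
      finsuppEquivDFinsupp.symm.trans e

instance nontrivial_pontryaginDual [CommGroup G] [DiscreteTopology G] [Finite G] [Nontrivial G] :
    Nontrivial (PontryaginDual G) := by
  obtain ⟨a, ha⟩ := exists_ne (1 : G)
  obtain ⟨χ, hχ⟩ := CommGroup.exists_apply_ne_one_of_hasEnoughRootsOfUnity G Circle ha
  let χ' : PontryaginDual G :=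
    (⟨(Units.coeHom Circle).comp χ, continuous_of_discreteTopology⟩ : G →ₜ* Circle)
  refine ⟨χ', 1, fun h => hχ <| Units.ext ?_⟩
  exact DFunLike.congr_fun h a

end DualOfPower

/-- A compact factor has finite image in a discrete monoid. -/
theorem nonempty_embedding_of_surjective_compact_prod {K D E : Type*} [MulOneClass K]
    [TopologicalSpace K] [CompactSpace K] [MulOneClass D] [MulOneClass E] [TopologicalSpace E]
    [DiscreteTopology E] [Infinite E] (f : K × D →* E) (hf : Function.Surjective f)
    (hK : Continuous fun k => f (k, 1)) : Nonempty (E ↪ D) := by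
  have hfin : (Set.range fun k => f (k, 1)).Finite := (isCompact_range hK).finite_of_discrete
  have := hfin.to_subtype
  have hsurj : Function.Surjective
      fun q : Set.range (fun k => f (k, 1)) × D => (q.1 : E) * f (1, q.2) := by
    intro e
    obtain ⟨⟨k, d⟩, rfl⟩ := hf e
    refine ⟨(⟨_, Set.mem_range_self k⟩, d), ?_⟩
    change f (k, 1) * f (1, d) = f (k, d)
    rw [← map_mul, Prod.mk_mul_mk, mul_one, one_mul]
  have : Infinite D := not_finite_iff_infinite.1 fun _ =>
    not_finite_iff_infinite.2 ‹Infinite E› (Finite.of_surjective _ hsurj)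
  obtain ⟨ι⟩ := nonempty_prod_embedding_of_finite (Set.range fun k => f (k, 1)) D
  exact ⟨(Function.Embedding.ofSurjective _ hsurj).trans ι⟩

section MapsOfPhaseSpaces

variable {A B : Type*} [Monoid A] [TopologicalSpace A] [Monoid B] [TopologicalSpace B]

theorem nonempty_dual_embedding_of_phaseSpace_surjective [CompactSpace A] [CompactSpace B]
    [Infinite (PontryaginDual B)]
    (ψ : PhaseSpace A →ₜ* PhaseSpace B) (hψ : Function.Surjective ψ) :
    Nonempty (PontryaginDual B ↪ PontryaginDual A) :=
  nonempty_embedding_of_surjective_compact_prod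
    ((MonoidHom.snd B (PontryaginDual B)).comp ψ.toMonoidHom)
    (Prod.snd_surjective.comp hψ)
    (continuous_snd.comp (ψ.continuous_toFun.comp (.prodMk_left 1)))

/-- An isomorphism `A ≃ B` of topological monoids induces an isomorphism of their phase spaces. -/
noncomputable def phaseSpaceCongr (e : A ≃ₜ* B) : PhaseSpace A ≃ₜ* PhaseSpace B where
  toFun u := (e u.1, PontryaginDual.map (e.symm : B →ₜ* A) u.2)
  invFun v := (e.symm v.1, PontryaginDual.map (e : A →ₜ* B) v.2)
  left_inv u := by ext <;> simp
  right_inv v := by ext <;> simp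
  map_mul' u v := by simp
  continuous_toFun := by fun_prop
  continuous_invFun := by fun_prop

end MapsOfPhaseSpaces

/-- Reindexing a power along a bijection of the index sets. -/
def powerCongrLeft {I J : Type*} (G : Type*) [Mul G] [TopologicalSpace G] (e : I ≃ J) :
    (I → G) ≃ₜ* (J → G) where
  __ := MulEquiv.arrowCongr e (.refl G)
  continuous_toFun := continuous_pi fun j => continuous_apply (e.symm j)
  continuous_invFun := continuous_pi fun i => continuous_apply (e i)

/-- `MulEquiv.funMultiplicative` as an isomorphism of topological monoids. -/
def continuousFunMultiplicative (I G : Type*) [Add G] [TopologicalSpace G] :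
    Multiplicative (I → G) ≃ₜ* (I → Multiplicative G) where
  __ := MulEquiv.funMultiplicative I G
  continuous_toFun := continuous_id
  continuous_invFun := continuous_id

section Powers

variable {I J G : Type*} [CommGroup G] [TopologicalSpace G] [DiscreteTopology G] [Finite G]
  [Nontrivial G]

theorem nonempty_index_embedding_of_phaseSpace_surjective [Infinite J]
    (ψ : PhaseSpace (I → G) →ₜ* PhaseSpace (J → G)) (hψ : Function.Surjective ψ) :
    Nonempty (J ↪ I) := by
  obtain ⟨eJ⟩ := nonempty_dual_pi_equiv_index (I := J) (G := G)
  have : Infinite (PontryaginDual (J → G)) := eJ.infinite_iff.2 ‹_›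
  obtain ⟨ι⟩ := nonempty_dual_embedding_of_phaseSpace_surjective ψ hψ
  have : Infinite (PontryaginDual (I → G)) := .of_injective ι ι.injective
  have : Infinite I := not_finite_iff_infinite.1 fun _ => not_finite (PontryaginDual (I → G))
  obtain ⟨eI⟩ := nonempty_dual_pi_equiv_index (I := I) (G := G)
  exact ⟨(eJ.symm.toEmbedding.trans ι).trans eI.toEmbedding⟩

theorem nonempty_index_equiv_of_phaseSpace_equiv
    (ψ : PhaseSpace (I → G) ≃ₜ* PhaseSpace (J → G)) : Nonempty (I ≃ J) := by
  have embJI (_ : Infinite J) : Nonempty (J ↪ I) :=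
    nonempty_index_embedding_of_phaseSpace_surjective
      (ContinuousMonoidHom.toContinuousMonoidHom ψ) ψ.surjective
  have embIJ (_ : Infinite I) : Nonempty (I ↪ J) :=
    nonempty_index_embedding_of_phaseSpace_surjective
      (ContinuousMonoidHom.toContinuousMonoidHom ψ.symm) ψ.symm.surjective
  obtain hI | hI := finite_or_infinite I <;> obtain hJ | hJ := finite_or_infinite J
  · have hcard := Nat.card_congr ψ.toEquiv
    rw [card_phaseSpace_pi, card_phaseSpace_pi] at hcard
    exact Finite.card_eq.1 (Nat.pow_right_injective Finite.one_lt_card hcard)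
  · obtain ⟨ι⟩ := embJI hJ
    exact ((Infinite.of_injective ι ι.injective).not_finite hI).elim
  · obtain ⟨ι⟩ := embIJ hI
    exact ((Infinite.of_injective ι ι.injective).not_finite hJ).elim
  · obtain ⟨ιJI⟩ := embJI hJ
    obtain ⟨ιIJ⟩ := embIJ hI
    exact ιIJ.antisymm ιJI

theorem exponent_p_position_space_unique_general {A B : Type*} [Monoid A] [TopologicalSpace A]
    [Monoid B] [TopologicalSpace B] (eA : A ≃ₜ* (I → G)) (eB : B ≃ₜ* (J → G))
    (ψ : PhaseSpace A ≃ₜ* PhaseSpace B) :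
    Nonempty (A ≃ₜ* B) ∧ Nonempty (I ≃ J) := by
  obtain ⟨e⟩ := nonempty_index_equiv_of_phaseSpace_equiv
    (((phaseSpaceCongr eA).symm.trans ψ).trans (phaseSpaceCongr eB))
  exact ⟨⟨(eA.trans (powerCongrLeft G e)).trans eB.symm⟩, ⟨e⟩⟩

end Powers

/-- Uniqueness of the "position space" in Theorem C: if two Cartesian powers
`∏_{i ∈ I} ℤ/pℤ` and `∏_{j ∈ J} ℤ/pℤ` (compact groups with the product topology) have
isomorphic phase spaces, compatibly with the standard bicharacters, then they are
isomorphic as topological groups; equivalently `I` and `J` have the same cardinality. -/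
theorem exponent_p_position_space_unique
    (p : ℕ) (hp : p.Prime) (I J : Type)
    (ψ : (Multiplicative (∀ _ : I, ZMod p) × PontryaginDual (Multiplicative (∀ _ : I, ZMod p)))
      ≃* (Multiplicative (∀ _ : J, ZMod p) × PontryaginDual (Multiplicative (∀ _ : J, ZMod p))))
    (hψ : Continuous ψ) (hψ' : Continuous ψ.symm)
    (hint : ∀ u v,
      stdBichar (Multiplicative (∀ _ : J, ZMod p)) (ψ u) (ψ v)
        = stdBichar (Multiplicative (∀ _ : I, ZMod p)) u v) :
    (∃ φ : (∀ _ : I, ZMod p) ≃+ (∀ _ : J, ZMod p), Continuous φ ∧ Continuous φ.symm) ∧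
    Nonempty (I ≃ J) := by
  have : Fact p.Prime := ⟨hp⟩
  obtain ⟨⟨φ⟩, hIJ⟩ := exponent_p_position_space_unique_general
    (continuousFunMultiplicative I (ZMod p)) (continuousFunMultiplicative J (ZMod p)) ⟨ψ, hψ, hψ'⟩
  exact ⟨⟨AddEquiv.toMultiplicative.symm φ.toMulEquiv, φ.continuous, φ.symm.continuous⟩, hIJ⟩
end

section
/- Let K be a finite abelian group and let e : K × K → U(1) be a nondegenerate alternating bicharacter (here K is discrete, so e♭ is required to be a group isomorphism of K onto Hom(K, U(1))). Then there exists a finite abelian group A and a group isomorphism φ : A × Â → K such that e(φ(x,χ), φ(x',χ')) = χ'(x)·χ(x')⁻¹ for all x, x' ∈ A and all χ, χ' ∈ Â, where Â = Hom(A, U(1)). -/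
/-!
The heart is a Lagrangian splitting: two isotropic subgroups `A`, `B` with `A ⊔ B = ⊤`. Write `E`
for `e♭ : K → Hom(K, U(1))` and `n` for the exponent of `K`. If `x` has order `n`, then so does the
character `E x`, hence also one of its values `ζ = E x y`. All values of `E` are powers of `ζ`, so
every element of `K` can be corrected by powers of `x` and `y` into the orthogonal complement of
`{x, y}`. The pairing is still nondegenerate on this smaller group, and adjoining `x` and `y` to the
two halves of a splitting of it gives one of `K`.

Nondegeneracy then makes `A` and `B` complementary and embeds each of them into the dual of the
other. As a finite abelian group has as many characters as elements, `B` is the dual of `A`.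
-/

/-- An alternating bicharacter on an abelian group `K` (no topology): a map `K × K → U(1)`
which is a homomorphism in each variable separately and satisfies `e k k = 1`. -/
def IsAltBicharacter {K : Type*} [CommGroup K] (e : K → K → Circle) : Prop :=
  (∀ k l l' : K, e k (l * l') = e k l * e k l') ∧
  (∀ k k' l : K, e (k * k') l = e k l * e k' l) ∧
  ∀ k : K, e k k = 1

/-- Nondegeneracy for a discrete group: the map `e♭ : K → Hom(K, U(1))`, `(e♭ l) k = e k l`,
is a group isomorphism. -/
def IsNondegenerate {K : Type*} [CommGroup K] (e : K → K → Circle) : Prop :=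
  ∃ F : K ≃* (K →* Circle), ∀ k l : K, F l k = e k l

section RootsOfUnity

variable {G M : Type*} [CommGroup M]

theorem exists_orderOf_apply_eq_orderOf [Group G] [Finite G] (f : G →* M) :
    ∃ g, orderOf (f g) = orderOf f := by
  have : Finite f.range := Set.finite_range f
  obtain ⟨m, hm⟩ := Monoid.exists_orderOf_eq_exponent
    (Monoid.ExponentExists.of_finite (G := f.range))
  obtain ⟨g, rfl⟩ := f.rangeRestrict_surjective m
  rw [← Subgroup.orderOf_coe, MonoidHom.coe_rangeRestrict] at hm
  refine ⟨g, Nat.dvd_antisymm (orderOf_dvd_of_pow_eq_one ?_) (orderOf_dvd_of_pow_eq_one ?_)⟩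
  · rw [← MonoidHom.pow_apply, pow_orderOf_eq_one, MonoidHom.one_apply]
  · ext h
    rw [hm, MonoidHom.pow_apply, MonoidHom.one_apply]
    exact congrArg Subtype.val (Monoid.pow_exponent_eq_one (f.rangeRestrict h))

theorem mem_zpowers_of_pow_eq_one {n : ℕ} [NeZero n] [IsCyclic (rootsOfUnity n M)]
    {ζ w : M} (hζ : IsPrimitiveRoot ζ n) (hw : w ^ n = 1) : w ∈ Subgroup.zpowers ζ := by
  have : HasEnoughRootsOfUnity M n := ⟨⟨ζ, hζ⟩, inferInstance⟩
  have hcard : Nat.card (rootsOfUnity n M) ≤ Nat.card (Subgroup.zpowers hζ.toRootsOfUnity) := by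
    rw [HasEnoughRootsOfUnity.natCard_rootsOfUnity, Nat.card_zpowers, ← Subgroup.orderOf_coe,
      ← orderOf_units, hζ.val_toRootsOfUnity_coe, ← hζ.eq_orderOf]
  have htop := Subgroup.eq_top_of_le_card _ hcard
  obtain ⟨i, hi⟩ := htop ▸ Subgroup.mem_top (rootsOfUnity.mkOfPowEq w hw)
  exact ⟨i, by simpa using congrArg (fun u : rootsOfUnity n M => ((u : Mˣ) : M)) hi⟩

variable (M) in
theorem hasEnoughRootsOfUnity_exponent_subgroup [Group G] [Finite G]
    [HasEnoughRootsOfUnity M (Monoid.exponent G)] (L : Subgroup G) :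
    HasEnoughRootsOfUnity M (Monoid.exponent L) :=
  .of_dvd M (Monoid.exponent_submonoid_dvd L.toSubmonoid)

variable (G M) in
theorem nonempty_monoidHom_mulEquiv_self [CommGroup G] [Finite G]
    [HasEnoughRootsOfUnity M (Monoid.exponent G)] : Nonempty ((G →* M) ≃* G) :=
  (CommGroup.monoidHom_mulEquiv_of_hasEnoughRootsOfUnity G M).map toUnits.monoidHomCongrRight.trans

theorem bijective_of_injective_of_injective {A B : Type*} [CommGroup A] [Finite A] [CommGroup B]
    [Finite B] [HasEnoughRootsOfUnity M (Monoid.exponent A)]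
    [HasEnoughRootsOfUnity M (Monoid.exponent B)] {f : A →* B →* M} {g : B →* A →* M}
    (hf : Function.Injective f) (hg : Function.Injective g) : Function.Bijective f := by
  obtain ⟨dualA⟩ := nonempty_monoidHom_mulEquiv_self A M
  obtain ⟨dualB⟩ := nonempty_monoidHom_mulEquiv_self B M
  have hBA : Nat.card B ≤ Nat.card A :=
    Nat.card_le_card_of_injective _ (dualA.injective.comp hg)
  exact (dualB.bijective.of_comp_iff' f).1 <|
    (dualB.injective.comp hf).bijective_of_nat_card_le hBA

end RootsOfUnity

section Pairing

variable {G H K M : Type*} [CommGroup G] [CommGroup H] [CommGroup K] [CommGroup M]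

/-- The restriction of a pairing `G × H → M`, written in curried form, to subgroups of the two
factors. -/
def restrictPairing (E : G →* H →* M) (A : Subgroup G) (B : Subgroup H) : A →* B →* M :=
  (MonoidHom.domRestrictHom B M).comp (E.comp A.subtype)

theorem eq_one_of_le_ker_of_le_ker {E : G →* H →* M} (hE : Function.Injective E)
    {B C : Subgroup H} (hBC : B ⊔ C = ⊤) {k : G} (hB : B ≤ (E k).ker) (hC : C ≤ (E k).ker) :
    k = 1 := by
  have hker : (E k).ker = ⊤ := top_le_iff.1 (hBC ▸ sup_le hB hC)
  exact (injective_iff_map_eq_one E).1 hE k (MonoidHom.ker_eq_top_iff.1 hker)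

theorem injective_restrictPairing_of_sup_eq_top {E : G →* H →* M} (hE : Function.Injective E)
    {A : Subgroup G} {B C : Subgroup H} (hBC : B ⊔ C = ⊤) (hAC : ∀ a ∈ A, ∀ c ∈ C, E a c = 1) :
    Function.Injective (restrictPairing E A B) := by
  refine (injective_iff_map_eq_one _).2 fun a ha =>
    Subtype.ext (eq_one_of_le_ker_of_le_ker hE hBC (fun b hb => ?_) (hAC a a.2))
  exact DFunLike.congr_fun ha (⟨b, hb⟩ : B)

/-- A pairing of a group with itself is alternating if every element is orthogonal to itself. -/
def IsAltPairing (E : K →* K →* M) : Prop :=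
  ∀ k, E k k = 1

/-- A subgroup is isotropic for a pairing if the pairing vanishes identically on it. -/
def IsIsotropic (E : K →* K →* M) (A : Subgroup K) : Prop :=
  ∀ a ∈ A, ∀ b ∈ A, E a b = 1

variable {E : K →* K →* M} {A B : Subgroup K}

theorem IsAltPairing.inv_apply_swap (halt : IsAltPairing E) (k l : K) : (E l k)⁻¹ = E k l := by
  have h : E k (k * l) * E l (k * l) = 1 := by
    rw [← MonoidHom.mul_apply, ← map_mul, halt]
  rw [map_mul, map_mul, halt, halt, one_mul, mul_one] at h
  exact (eq_inv_of_mul_eq_one_left h).symm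

theorem IsAltPairing.apply_eq_one_comm (halt : IsAltPairing E) {k l : K} :
    E k l = 1 ↔ E l k = 1 := by
  rw [← halt.inv_apply_swap, inv_eq_one]

theorem IsAltPairing.isIsotropic_zpowers (halt : IsAltPairing E) (x : K) :
    IsIsotropic E (Subgroup.zpowers x) := by
  rintro _ ⟨i, rfl⟩ _ ⟨j, rfl⟩
  simp [halt x]

theorem IsIsotropic.sup (halt : IsAltPairing E) (hA : IsIsotropic E A) (hB : IsIsotropic E B)
    (hAB : ∀ a ∈ A, ∀ b ∈ B, E a b = 1) : IsIsotropic E (A ⊔ B) := by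
  intro _ hk _ hl
  obtain ⟨a, ha, b, hb, rfl⟩ := Subgroup.mem_sup.1 hk
  obtain ⟨a', ha', b', hb', rfl⟩ := Subgroup.mem_sup.1 hl
  simp [hA a ha a' ha', hB b hb b' hb', hAB a ha b' hb', halt.apply_eq_one_comm.1 (hAB a' ha' b hb)]

theorem IsIsotropic.zpowers_sup_map_subtype (halt : IsAltPairing E) {L : Subgroup K}
    {A : Subgroup L} (hA : IsIsotropic (restrictPairing E L L) A) {x : K} (hx : L ≤ (E x).ker) :
    IsIsotropic E (Subgroup.zpowers x ⊔ A.map L.subtype) := by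
  refine (halt.isIsotropic_zpowers x).sup halt ?_ ?_
  · rintro _ ⟨a, ha, rfl⟩ _ ⟨b, hb, rfl⟩
    exact hA a ha b hb
  · rintro _ ⟨i, rfl⟩ _ ⟨a, -, rfl⟩
    have hxa : E x a = 1 := hx a.2
    simp [hxa]

theorem IsIsotropic.isCompl_of_sup_eq_top (hA : IsIsotropic E A) (hB : IsIsotropic E B)
    (hE : Function.Injective E) (hAB : A ⊔ B = ⊤) : IsCompl A B := by
  refine ⟨Subgroup.disjoint_def.2 fun hkA hkB => ?_, codisjoint_iff.2 hAB⟩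
  exact eq_one_of_le_ker_of_le_ker hE hAB (hA _ hkA) (hB _ hkB)

end Pairing

section Splitting

variable {K M : Type*} [CommGroup K] [CommGroup M] {E : K →* K →* M}

theorem exists_isPrimitiveRoot_apply [Finite K] (hE : Function.Injective E) :
    ∃ x y, IsPrimitiveRoot (E x y) (Monoid.exponent K) := by
  obtain ⟨x, hx⟩ := Monoid.exists_orderOf_eq_exponent (Monoid.ExponentExists.of_finite (G := K))
  obtain ⟨y, hy⟩ := exists_orderOf_apply_eq_orderOf (E x)
  refine ⟨x, y, ?_⟩
  rw [← hx, ← orderOf_injective E hE x, ← hy]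
  exact IsPrimitiveRoot.orderOf _

theorem IsAltPairing.zpowers_sup_zpowers_sup_ker_inf_ker_eq_top (halt : IsAltPairing E) {n : ℕ}
    [NeZero n] [IsCyclic (rootsOfUnity n M)] {x y : K} (hx : x ^ n = 1) (hy : y ^ n = 1)
    (hxy : IsPrimitiveRoot (E x y) n) :
    Subgroup.zpowers x ⊔ Subgroup.zpowers y ⊔ ((E x).ker ⊓ (E y).ker) = ⊤ := by
  refine eq_top_iff.2 fun k _ => ?_
  have hpow {z : K} (hz : z ^ n = 1) : E z k ^ n = 1 := by
    rw [← MonoidHom.pow_apply, ← map_pow, hz, map_one, MonoidHom.one_apply]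
  obtain ⟨j, hj : E x y ^ j = E x k⟩ := mem_zpowers_of_pow_eq_one hxy (hpow hx)
  obtain ⟨i, hi : E x y ^ i = E y k⟩ := mem_zpowers_of_pow_eq_one hxy (hpow hy)
  -- `E y x = (E x y)⁻¹`, which is why the exponent of `x` changes sign.
  have hmem : (x ^ (-i) * y ^ j)⁻¹ * k ∈ (E x).ker ⊓ (E y).ker := by
    constructor
    · simp [halt x, ← hj]
    · simp [halt y, ← hi, ← halt.inv_apply_swap y x]
  rw [← mul_inv_cancel_left (x ^ (-i) * y ^ j) k]
  exact Subgroup.mul_mem_sup (Subgroup.mul_mem_sup ⟨-i, rfl⟩ ⟨j, rfl⟩) hmem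

theorem IsAltPairing.exists_isIsotropic_sup_eq_top [Finite K]
    [IsCyclic (rootsOfUnity (Monoid.exponent K) M)] (halt : IsAltPairing E)
    (hE : Function.Injective E) :
    ∃ A B : Subgroup K, IsIsotropic E A ∧ IsIsotropic E B ∧ A ⊔ B = ⊤ := by
  induction hcard : Nat.card K using Nat.strong_induction_on generalizing K with
  | _ N ih =>
  subst hcard
  rcases subsingleton_or_nontrivial K with hK | hK
  · exact ⟨⊥, ⊥, by simp [IsIsotropic], by simp [IsIsotropic], Subsingleton.elim _ _⟩
  obtain ⟨x, y, hxy⟩ := exists_isPrimitiveRoot_apply hE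
  have htop := halt.zpowers_sup_zpowers_sup_ker_inf_ker_eq_top
    (Monoid.pow_exponent_eq_one x) (Monoid.pow_exponent_eq_one y) hxy
  set L : Subgroup K := (E x).ker ⊓ (E y).ker
  have hLx : L ≤ (E x).ker := inf_le_left
  have hLy : L ≤ (E y).ker := inf_le_right
  have hL_lt : Nat.card L < Nat.card K := by
    refine L.card_le_card_group.lt_of_ne fun h => ?_
    have hy : y ∈ L := Subgroup.eq_top_of_card_eq L h ▸ Subgroup.mem_top y
    have h1 : IsPrimitiveRoot (1 : M) (Monoid.exponent K) := (hLx hy : E x y = 1) ▸ hxy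
    exact not_subsingleton K (Monoid.exp_eq_one_iff.1 (h1.eq_orderOf.trans orderOf_one))
  have hL_alt : IsAltPairing (restrictPairing E L L) := fun l => halt l
  have hL_inj : Function.Injective (restrictPairing E L L) := by
    refine injective_restrictPairing_of_sup_eq_top hE ((sup_comm _ _).trans htop) fun l hl => ?_
    change _ ≤ (E l).ker
    simp only [sup_le_iff, Subgroup.zpowers_le]
    exact ⟨halt.apply_eq_one_comm.1 (hLx hl), halt.apply_eq_one_comm.1 (hLy hl)⟩
  have : IsCyclic (rootsOfUnity (Monoid.exponent L) M) := Subgroup.isCyclic_of_le <|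
    rootsOfUnity_le_of_dvd (Monoid.exponent_submonoid_dvd L.toSubmonoid)
  obtain ⟨A, B, hA, hB, hAB⟩ := ih _ hL_lt hL_alt hL_inj rfl
  refine ⟨_, _, hA.zpowers_sup_map_subtype halt hLx, hB.zpowers_sup_map_subtype halt hLy, ?_⟩
  rw [sup_sup_sup_comm, ← Subgroup.map_sup, hAB, ← MonoidHom.range_eq_map, Subgroup.range_subtype,
    htop]

/-- The internal direct product decomposition of an abelian group given by two complementary
subgroups. -/
noncomputable def prodMulEquivOfIsCompl {A B : Subgroup K} (hAB : IsCompl A B) : A × B ≃* K :=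
  MulEquiv.ofBijective (A.subtype.coprod B.subtype) <|
    Subgroup.isComplement'_of_disjoint_and_mul_eq_univ hAB.disjoint <| by
      rw [← Subgroup.mul_normal, hAB.sup_eq_top, Subgroup.coe_top]

theorem IsAltPairing.exists_subgroup_prod_dual_mulEquiv [Finite K]
    [IsCyclic (rootsOfUnity (Monoid.exponent K) M)] (halt : IsAltPairing E)
    (hE : Function.Injective E) :
    ∃ (A : Subgroup K) (φ : A × (A →* M) ≃* K), ∀ (x x' : A) (χ χ' : A →* M),
      E (φ (x', χ')) (φ (x, χ)) = χ' x * (χ x')⁻¹ := by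
  obtain ⟨A, B, hA, hB, hAB⟩ := halt.exists_isIsotropic_sup_eq_top hE
  obtain ⟨x, y, hxy⟩ := exists_isPrimitiveRoot_apply hE
  have : HasEnoughRootsOfUnity M (Monoid.exponent K) := ⟨⟨E x y, hxy⟩, inferInstance⟩
  have := hasEnoughRootsOfUnity_exponent_subgroup M A
  have := hasEnoughRootsOfUnity_exponent_subgroup M B
  have hbij : Function.Bijective (restrictPairing E B A) :=
    bijective_of_injective_of_injective
      (injective_restrictPairing_of_sup_eq_top hE hAB hB)
      (injective_restrictPairing_of_sup_eq_top hE ((sup_comm _ _).trans hAB) hA)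
  let dual : B ≃* (A →* M) := MulEquiv.ofBijective _ hbij
  have hdual (χ : A →* M) (x : A) : E (dual.symm χ) x = χ x :=
    DFunLike.congr_fun (dual.apply_symm_apply χ) x
  refine ⟨A, ((MulEquiv.refl A).prodCongr dual.symm).trans
    (prodMulEquivOfIsCompl (hA.isCompl_of_sup_eq_top hB hE hAB)), fun x x' χ χ' => ?_⟩
  change E (x' * dual.symm χ') (x * dual.symm χ) = _
  have hAA : E x' x = 1 := hA _ x'.2 _ x.2
  have hBB : E (dual.symm χ') (dual.symm χ) = 1 := hB _ (dual.symm χ').2 _ (dual.symm χ).2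
  have hxB : E x' (dual.symm χ) = (χ x')⁻¹ := by rw [← halt.inv_apply_swap, hdual]
  simp [hAA, hBB, hxB, hdual, mul_comm]

end Splitting

/-- `E` plays the role of `e♭`, so that `E l k` is `e(k, l)`. -/
theorem finite_heisenberg_phase_space_splits_general {K M : Type*} [CommGroup K] [Finite K]
    [CommGroup M] [IsCyclic (rootsOfUnity (Monoid.exponent K) M)] (E : K →* K →* M)
    (halt : IsAltPairing E) (hE : Function.Injective E) :
    ∃ (A : Type) (_ : CommGroup A), Finite A ∧
      ∃ φ : A × (A →* M) ≃* K,
        ∀ (x x' : A) (χ χ' : A →* M), E (φ (x', χ')) (φ (x, χ)) = χ' x * (χ x')⁻¹ := by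
  obtain ⟨A, φ, hφ⟩ := halt.exists_subgroup_prod_dual_mulEquiv hE
  let σ : Shrink.{0} A ≃* A := Shrink.mulEquiv
  refine ⟨Shrink.{0} A, inferInstance, Finite.of_equiv A σ.symm.toEquiv,
    (σ.prodCongr σ.monoidHomCongrLeft).trans φ, fun x x' χ χ' => ?_⟩
  change E (φ (σ x', χ'.comp σ.symm.toMonoidHom)) (φ (σ x, χ.comp σ.symm.toMonoidHom)) = _
  simpa using hφ (σ x) (σ x') (χ.comp σ.symm.toMonoidHom) (χ'.comp σ.symm.toMonoidHom)

/-- The finite case of Theorem A: every nondegenerate alternating bicharacter on a finite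
abelian group `K` is equivalent to the standard bicharacter on `A × Hom(A, U(1))` for some
finite abelian group `A`. -/
theorem finite_heisenberg_phase_space_splits
    {K : Type*} [CommGroup K] [Finite K]
    (e : K → K → Circle) (he : IsAltBicharacter e) (hnd : IsNondegenerate e) :
    ∃ (A : Type) (_iA : CommGroup A), Finite A ∧
      ∃ φ : A × (A →* Circle) ≃* K,
        ∀ (x x' : A) (χ χ' : A →* Circle),
          e (φ (x, χ)) (φ (x', χ')) = χ' x * (χ x')⁻¹ := by
  obtain ⟨F, hF⟩ := hnd
  obtain ⟨A, iA, hA, φ, hφ⟩ := finite_heisenberg_phase_space_splits_general F.toMonoidHom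
    (fun k => (hF k k).trans (he.2.2 k)) F.injective
  exact ⟨A, iA, hA, φ, fun x x' χ χ' => (hF _ _).symm.trans (hφ x x' χ χ')⟩
end

section
/- Let e : ℝⁿ × ℝⁿ → U(1) be a nondegenerate alternating bicharacter on the additive topological group ℝⁿ. Then n is even, and there exists a nondegenerate alternating (symplectic) ℝ-bilinear form Q : ℝⁿ × ℝⁿ → ℝ such that e(k,l) = exp(i·Q(k,l)) for all k, l ∈ ℝⁿ. -/
/-- An alternating bicharacter on an additively written topological abelian group `K`:
a continuous map `K × K → U(1)` which is a homomorphism in each variable separately and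
satisfies `e k k = 1`. -/
def IsAltBicharacterAdd {K : Type*} [AddCommGroup K] [TopologicalSpace K]
    (e : K → K → Circle) : Prop :=
  (Continuous fun p : K × K => e p.1 p.2) ∧
  (∀ k l l' : K, e k (l + l') = e k l * e k l') ∧
  (∀ k k' l : K, e (k + k') l = e k l * e k' l) ∧
  ∀ k : K, e k k = 1

/-- Nondegeneracy: the map `e♭ : K → K̂`, `(e♭ l) k = e k l`, is an isomorphism of
topological groups onto the Pontryagin dual. -/
def IsNondegenerateAdd {K : Type*} [AddCommGroup K] [TopologicalSpace K]
    (e : K → K → Circle) : Prop :=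
  ∃ F : Multiplicative K ≃* PontryaginDual (Multiplicative K),
    Continuous F ∧ Continuous F.symm ∧
    ∀ k l : K, F (Multiplicative.ofAdd l) (Multiplicative.ofAdd k) = e k l

/-!
A product of real topological vector spaces is contractible, so a bicharacter `e` lifts through the
covering `Circle.exp : ℝ → U(1)` to a continuous function `q` with `q (0, 0) = 0`. Each identity
satisfied by `e` says that some continuous combination of values of `q` lies in the kernel `2πℤ` of
`Circle.exp`; by connectedness it is constant, hence zero because it vanishes at the origin. So `q`
is biadditive and alternating, and continuity upgrades biadditivity to `ℝ`-bilinearity. A vector in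
the radical of `q` is killed by `e♭`, so it is zero. Finally, the Gram matrix `A` of `q` satisfies
`Aᵀ = -A` and `det A ≠ 0`, so `det A = (-1) ^ n * det A` forces the dimension `n` to be even.
-/

lemma exists_lift_of_nullhomotopic {A B E : Type*} [TopologicalSpace A] [TopologicalSpace B]
    [TopologicalSpace E] {p : E → B} (cov : IsCoveringMap p) (hp : Function.Surjective p)
    {f : C(A, B)} (hf : f.Nullhomotopic) : ∃ F : C(A, E), p ∘ F = f := by
  obtain ⟨b, ⟨H⟩⟩ := hf
  obtain ⟨x, rfl⟩ := hp b
  have H_zero (a : A) : H.symm (0, a) = p (ContinuousMap.const A x a) := H.symm.apply_zero a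
  let lift := cov.liftHomotopy H.symm (ContinuousMap.const A x) H_zero
  refine ⟨lift.comp ((ContinuousMap.const A 1).prodMk (ContinuousMap.id A)), funext fun a => ?_⟩
  calc p (lift (1, a)) = H.symm (1, a) := congr_fun (cov.liftHomotopy_lifts _ _ H_zero) (1, a)
    _ = f a := H.symm.apply_one a

section CircleLift

variable {X : Type*} [TopologicalSpace X]

lemma exists_continuous_exp_eq [ContractibleSpace X] {f : X → Circle} (hf : Continuous f) {a : X}
    (ha : f a = 1) : ∃ g : X → ℝ, Continuous g ∧ g a = 0 ∧ ∀ x, Circle.exp (g x) = f x := by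
  obtain ⟨F, hF⟩ := exists_lift_of_nullhomotopic Circle.isCoveringMap_exp Circle.exp_surjective
    ((id_nullhomotopic X).comp_right ⟨f, hf⟩)
  have hFf (x : X) : Circle.exp (F x) = f x := congr_fun hF x
  exact ⟨fun x => F x - F a, by fun_prop, sub_self _, fun x => by
    rw [Circle.exp_sub, hFf, hFf, ha, div_one]⟩

lemma eq_zero_of_exp_eq_one [PreconnectedSpace X] {g : X → ℝ} (hg : Continuous g)
    (hexp : ∀ x, Circle.exp (g x) = 1) {a : X} (ha : g a = 0) (x : X) : g x = 0 :=
  (Circle.isCoveringMap_exp.const_of_comp hg (fun x y => (hexp x).trans (hexp y).symm) x a).trans ha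

end CircleLift

section Bilinear

variable {E F : Type*}
  [AddCommGroup E] [Module ℝ E] [TopologicalSpace E] [ContinuousAdd E] [ContinuousSMul ℝ E]
  [AddCommGroup F] [Module ℝ F] [TopologicalSpace F] [ContinuousAdd F] [ContinuousSMul ℝ F]

lemma isLinearMap_of_exp_map_add {g : E → ℝ} (hg : Continuous g) (hg_zero : g 0 = 0)
    (hg_add : ∀ x y, Circle.exp (g (x + y)) = Circle.exp (g x) * Circle.exp (g y)) :
    IsLinearMap ℝ g := by
  have map_add (x y : E) : g (x + y) = g x + g y := by
    have defect_eq_zero := eq_zero_of_exp_eq_one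
      (g := fun p : E × E => g (p.1 + p.2) - (g p.1 + g p.2)) (by fun_prop)
      (fun p => by rw [Circle.exp_sub, Circle.exp_add, hg_add, div_self'])
      (a := 0) (by simp [hg_zero])
    exact sub_eq_zero.mp (defect_eq_zero (x, y))
  exact ⟨map_add, map_real_smul (AddMonoidHom.mk' g map_add) hg⟩

lemma exists_bilinear_exp_eq {e : E → F → Circle} (he : Continuous fun p : E × F => e p.1 p.2)
    (map_add_right : ∀ k l l', e k (l + l') = e k l * e k l')
    (map_add_left : ∀ k k' l, e (k + k') l = e k l * e k' l) :
    ∃ Q : E →ₗ[ℝ] F →ₗ[ℝ] ℝ,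
      (Continuous fun p : E × F => Q p.1 p.2) ∧ ∀ k l, e k l = Circle.exp (Q k l) := by
  have map_zero_right (k : E) : e k 0 = 1 := by simpa using map_add_right k 0 0
  have map_zero_left (l : F) : e 0 l = 1 := by simpa using map_add_left 0 0 l
  obtain ⟨q, hq, hq_zero, hqe⟩ := exists_continuous_exp_eq he (a := (0, 0)) (map_zero_right 0)
  have q_zero_right (k : E) : q (k, 0) = 0 :=
    eq_zero_of_exp_eq_one (g := fun k => q (k, 0)) (by fun_prop)
      (fun k => (hqe (k, 0)).trans (map_zero_right k)) hq_zero k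
  have q_zero_left (l : F) : q (0, l) = 0 :=
    eq_zero_of_exp_eq_one (g := fun l => q (0, l)) (by fun_prop)
      (fun l => (hqe (0, l)).trans (map_zero_left l)) hq_zero l
  have linear_right (k : E) : IsLinearMap ℝ fun l => q (k, l) :=
    isLinearMap_of_exp_map_add (by fun_prop) (q_zero_right k)
      fun l l' => by simp only [hqe, map_add_right]
  have linear_left (l : F) : IsLinearMap ℝ fun k => q (k, l) :=
    isLinearMap_of_exp_map_add (by fun_prop) (q_zero_left l)
      fun k k' => by simp only [hqe, map_add_left]
  exact ⟨LinearMap.mk₂ ℝ (fun k l => q (k, l))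
    (fun k k' l => (linear_left l).map_add k k') (fun c k l => (linear_left l).map_smul c k)
    (fun k => (linear_right k).map_add) (fun c k => (linear_right k).map_smul c),
    hq, fun k l => (hqe (k, l)).symm⟩

lemma IsAltBicharacterAdd.exists_isAlt_exp_eq {e : E → E → Circle} (he : IsAltBicharacterAdd e) :
    ∃ Q : E →ₗ[ℝ] E →ₗ[ℝ] ℝ, Q.IsAlt ∧ ∀ k l, e k l = Circle.exp (Q k l) := by
  obtain ⟨continuous_e, map_add_right, map_add_left, map_self⟩ := he
  obtain ⟨Q, continuous_Q, hQe⟩ := exists_bilinear_exp_eq continuous_e map_add_right map_add_left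
  have hQ : Q.IsAlt := eq_zero_of_exp_eq_one (g := fun k => Q k k) (a := 0)
    (continuous_Q.comp (continuous_id.prodMk continuous_id))
    (fun k => (hQe k k).symm.trans (map_self k)) (map_zero _)
  exact ⟨Q, hQ, hQe⟩

end Bilinear

lemma IsNondegenerateAdd.eq_zero {K : Type*} [AddCommGroup K] [TopologicalSpace K]
    {e : K → K → Circle} (he : IsNondegenerateAdd e) {l : K} (hl : ∀ k, e k l = 1) : l = 0 := by
  obtain ⟨F, -, -, hF⟩ := he
  have F_eq_one : F (Multiplicative.ofAdd l) = 1 :=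
    DFunLike.ext _ _ fun k => (hF k.toAdd l).trans (hl k.toAdd)
  exact ofAdd_eq_one.mp ((map_eq_one_iff F F.injective).mp F_eq_one)

lemma det_eq_zero_of_transpose_eq_neg {ι R : Type*} [Fintype ι] [DecidableEq ι] [CommRing R]
    [IsAddTorsionFree R] {A : Matrix ι ι R} (hA : A.transpose = -A) (hι : Odd (Fintype.card ι)) :
    A.det = 0 := by
  refine self_eq_neg.mp ?_
  calc A.det = A.transpose.det := A.det_transpose.symm
    _ = -A.det := by rw [hA, Matrix.det_neg, hι.neg_one_pow, neg_one_mul]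

lemma even_finrank_of_isAlt_of_separatingLeft {R M : Type*} [CommRing R] [IsDomain R]
    [IsAddTorsionFree R] [AddCommGroup M] [Module R M] [Module.Free R M] [Module.Finite R M]
    {B : M →ₗ[R] M →ₗ[R] R} (hB : B.IsAlt) (hB_sep : B.SeparatingLeft) :
    Even (Module.finrank R M) := by
  let b := Module.finBasis R M
  have hskew : (LinearMap.toMatrix₂ b b B).transpose = -LinearMap.toMatrix₂ b b B := by
    ext i j
    simp only [Matrix.transpose_apply, Matrix.neg_apply, LinearMap.toMatrix₂_apply, hB.neg]
  by_contra hodd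
  exact (LinearMap.separatingLeft_iff_det_ne_zero b).mp hB_sep
    (det_eq_zero_of_transpose_eq_neg hskew (by simpa using hodd))

theorem real_bicharacter_symplectic_general {E : Type*} [AddCommGroup E] [Module ℝ E]
    [TopologicalSpace E] [ContinuousAdd E] [ContinuousSMul ℝ E] {e : E → E → Circle}
    (he : IsAltBicharacterAdd e) (hnd : ∀ l, (∀ k, e k l = 1) → l = 0) :
    (FiniteDimensional ℝ E → Even (Module.finrank ℝ E)) ∧
    ∃ Q : E →ₗ[ℝ] E →ₗ[ℝ] ℝ,
      Q.IsAlt ∧ Q.SeparatingLeft ∧ ∀ k l, e k l = Circle.exp (Q k l) := by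
  obtain ⟨Q, hQ, hQe⟩ := he.exists_isAlt_exp_eq
  have hQ_sep : Q.SeparatingLeft := fun k hk =>
    hnd k fun l => by rw [hQe, hQ.eq_iff.mp (hk l), Circle.exp_zero]
  exact ⟨fun _ => even_finrank_of_isAlt_of_separatingLeft hQ hQ_sep, Q, hQ, hQ_sep, hQe⟩

/-- A nondegenerate alternating bicharacter on `ℝⁿ` forces `n` even and is of the form
`e (k, l) = exp (i Q (k, l))` for a nondegenerate alternating (symplectic) real bilinear
form `Q`. -/
theorem real_bicharacter_symplectic
    (n : ℕ) (e : (Fin n → ℝ) → (Fin n → ℝ) → Circle)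
    (he : IsAltBicharacterAdd e) (hnd : IsNondegenerateAdd e) :
    Even n ∧
    ∃ Q : (Fin n → ℝ) →ₗ[ℝ] (Fin n → ℝ) →ₗ[ℝ] ℝ,
      (∀ k, Q k k = 0) ∧
      (∀ k, (∀ l, Q k l = 0) → k = 0) ∧
      ∀ k l, e k l = Circle.exp (Q k l) := by
  obtain ⟨heven, hQ⟩ := real_bicharacter_symplectic_general he fun _ => hnd.eq_zero
  exact ⟨Module.finrank_fin_fun ℝ (n := n) ▸ heven inferInstance, hQ⟩
end

section
/- Let K be an abelian group and let c : K × K → U(1) be a 2-cocycle, i.e., c(k,l)·c(k+l,m) = c(k,l+m)·c(l,m) for all k, l, m ∈ K. If c is symmetric, i.e., c(k,l) = c(l,k) for all k, l ∈ K, then c is a coboundary: there exists a function f : K → U(1) such that c(k,l) = f(k+l)·f(k)⁻¹·f(l)⁻¹ for all k, l ∈ K. -/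
/-!
A symmetric 2-cocycle `c` on `K` with values in `A` defines a *commutative* extension
`1 → A → E → K → 0`, where `E = A × K` has the twisted product
`(a, k) * (b, l) = (a * b * c k l, k + l)`. As `A` acts freely on `E`, it embeds in the
Grothendieck group of `E`. If `A` is divisible, it is an injective `ℤ`-module, so this embedding
has a retraction, which restricts to some `r : E → A`. Applying `r` to
`(1, k) * (1, l) = c k l * (1, k + l)` exhibits `c` as the coboundary of `k ↦ (r (1, k))⁻¹`.
-/

theorem exists_monoidHom_comp_eq_of_injective {A G H : Type*} [CommGroup A] [RootableBy A ℤ]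
    [CommGroup G] [CommGroup H] (i : G →* H) (hi : Function.Injective i) (g : G →* A) :
    ∃ h : H →* A, h.comp i = g := by
  let : DivisibleBy (Additive A) ℤ :=
    divisibleByOfSMulRightSurj (Additive A) ℤ fun hn ↦ RootableBy.surjective_pow A ℤ hn
  obtain ⟨h, hh⟩ := (Module.Baer.of_divisible (Additive A)).extension_property_addMonoidHom
    i.toAdditive hi g.toAdditive
  exact ⟨MonoidHom.toAdditive.symm h, MonoidHom.toAdditive.injective hh⟩

/-- Symmetric 2-cocycles on a commutative monoid `K`, written additively, with values in a
commutative group `A`, written multiplicatively, on which `K` acts trivially. They are not assumed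
to be normalized. -/
structure SymmCocycle (K A : Type*) [AddCommMonoid K] [CommGroup A] where
  toFun : K → K → A
  cocycle : ∀ k l m, toFun k l * toFun (k + l) m = toFun k (l + m) * toFun l m
  symm : ∀ k l, toFun k l = toFun l k

namespace SymmCocycle

variable {K A : Type*} [AddCommMonoid K] [CommGroup A]

instance : CoeFun (SymmCocycle K A) fun _ ↦ K → K → A := ⟨toFun⟩

theorem map_zero_left (c : SymmCocycle K A) (k : K) : c 0 k = c 0 0 := by
  have h := c.cocycle 0 0 k
  simp only [zero_add] at h
  exact (mul_right_cancel h).symm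

/-- The extension of `K` by `A` defined by the cocycle `c`. It is a structure depending on `c`, and
not the type `A × K`, so that it can carry the product twisted by `c`. -/
@[ext]
structure Extension (c : SymmCocycle K A) where
  fst : A
  snd : K

namespace Extension

open Algebra

variable {c : SymmCocycle K A}

instance : Mul c.Extension := ⟨fun x y ↦ ⟨x.fst * y.fst * c x.snd y.snd, x.snd + y.snd⟩⟩

instance : One c.Extension := ⟨⟨(c 0 0)⁻¹, 0⟩⟩

@[simp] theorem fst_mul (x y : c.Extension) : (x * y).fst = x.fst * y.fst * c x.snd y.snd := rfl

@[simp] theorem snd_mul (x y : c.Extension) : (x * y).snd = x.snd + y.snd := rfl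

@[simp] theorem fst_one : (1 : c.Extension).fst = (c 0 0)⁻¹ := rfl

@[simp] theorem snd_one : (1 : c.Extension).snd = 0 := rfl

protected theorem mul_comm (x y : c.Extension) : x * y = y * x := by
  ext
  · rw [fst_mul, fst_mul, mul_comm x.fst, c.symm]
  · exact add_comm _ _

protected theorem mul_assoc (x y z : c.Extension) : x * y * z = x * (y * z) := by
  ext
  · calc
      x.fst * y.fst * c x.snd y.snd * z.fst * c (x.snd + y.snd) z.snd
        = x.fst * y.fst * z.fst * (c x.snd y.snd * c (x.snd + y.snd) z.snd) := by
          ac_rfl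
      _ = x.fst * y.fst * z.fst * (c x.snd (y.snd + z.snd) * c y.snd z.snd) := by rw [c.cocycle]
      _ = x.fst * (y.fst * z.fst * c y.snd z.snd) * c x.snd (y.snd + z.snd) := by
          ac_rfl
  · exact add_assoc _ _ _

protected theorem one_mul (x : c.Extension) : 1 * x = x := by
  ext <;> simp [c.map_zero_left x.snd]

instance : CommMonoid c.Extension where
  mul_assoc := Extension.mul_assoc
  one_mul := Extension.one_mul
  mul_one x := by rw [Extension.mul_comm, Extension.one_mul]
  mul_comm := Extension.mul_comm

/-- The inclusion of `A` into the extension. Since `c` need not be normalized, the image of `a`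
is not `(a, 0)`. -/
def inl (c : SymmCocycle K A) : A →* c.Extension where
  toFun a := ⟨a / c 0 0, 0⟩
  map_one' := by ext <;> simp
  map_mul' a b := by
    ext
    · simp [div_eq_mul_inv, mul_assoc, mul_left_comm]
    · simp

@[simp] theorem fst_inl (a : A) : (inl c a).fst = a / c 0 0 := rfl

@[simp] theorem snd_inl (a : A) : (inl c a).snd = 0 := rfl

theorem inl_mul (a : A) (x : c.Extension) : inl c a * x = ⟨a * x.fst, x.snd⟩ := by
  ext
  · simp [c.map_zero_left x.snd, div_mul_eq_mul_div]
  · simp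

theorem mk_one_mul_mk_one (k l : K) :
    (⟨1, k⟩ * ⟨1, l⟩ : c.Extension) = inl c (c k l) * ⟨1, k + l⟩ := by
  rw [inl_mul]
  ext <;> simp

theorem of_comp_inl_injective : Function.Injective ((GrothendieckGroup.of).comp (inl c)) := by
  intro a b h
  obtain ⟨x, hx⟩ := (Localization.monoidOf (⊤ : Submonoid c.Extension)).eq_iff_exists.mp h
  rw [mul_comm, mul_comm _ (inl c b), inl_mul, inl_mul] at hx
  exact mul_right_cancel (congrArg fst hx)

theorem exists_comp_inl_eq_id [RootableBy A ℤ] (c : SymmCocycle K A) :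
    ∃ r : c.Extension →* A, r.comp (inl c) = MonoidHom.id A := by
  obtain ⟨r, hr⟩ :=
    exists_monoidHom_comp_eq_of_injective _ (of_comp_inl_injective (c := c)) (MonoidHom.id A)
  exact ⟨r.comp GrothendieckGroup.of, hr⟩

end Extension

end SymmCocycle

theorem symmetric_cocycle_is_coboundary_general
    {K A : Type*} [AddCommMonoid K] [CommGroup A] [RootableBy A ℤ] (c : K → K → A)
    (hcocycle : ∀ k l m : K, c k l * c (k + l) m = c k (l + m) * c l m)
    (hsymm : ∀ k l : K, c k l = c l k) :
    ∃ f : K → A, ∀ k l : K, c k l = f (k + l) * (f k)⁻¹ * (f l)⁻¹ := by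
  let c' : SymmCocycle K A := ⟨c, hcocycle, hsymm⟩
  obtain ⟨r, hr⟩ := SymmCocycle.Extension.exists_comp_inl_eq_id c'
  let s (k : K) : c'.Extension := ⟨1, k⟩
  have hs (k l : K) : s k * s l = SymmCocycle.Extension.inl c' (c k l) * s (k + l) :=
    SymmCocycle.Extension.mk_one_mul_mk_one k l
  have r_mul (k l : K) : r (s k) * r (s l) = c k l * r (s (k + l)) := by
    rw [← map_mul, hs, map_mul, ← MonoidHom.comp_apply, hr, MonoidHom.id_apply]
  refine ⟨fun k ↦ (r (s k))⁻¹, fun k l ↦ ?_⟩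
  rw [inv_inv, inv_inv, mul_assoc, r_mul, mul_comm, mul_inv_cancel_right]

theorem circle_zpow_left_surjective {n : ℤ} (hn : n ≠ 0) :
    Function.Surjective fun z : Circle ↦ z ^ n := fun z ↦ by
  refine ⟨Circle.exp (Complex.arg z / n), ?_⟩
  dsimp only
  rw [← Circle.exp_zsmul, zsmul_eq_mul, mul_div_cancel₀ _ (Int.cast_ne_zero.mpr hn),
    Circle.exp_arg]

noncomputable instance : RootableBy Circle ℤ :=
  rootableByOfPowLeftSurj Circle ℤ circle_zpow_left_surjective

/-- A symmetric `U(1)`-valued 2-cocycle on an abelian group is a coboundary. -/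
theorem symmetric_cocycle_is_coboundary
    {K : Type*} [AddCommGroup K] (c : K → K → Circle)
    (hcocycle : ∀ k l m : K, c k l * c (k + l) m = c k (l + m) * c l m)
    (hsymm : ∀ k l : K, c k l = c l k) :
    ∃ f : K → Circle, ∀ k l : K, c k l = f (k + l) * (f k)⁻¹ * (f l)⁻¹ :=
  symmetric_cocycle_is_coboundary_general c hcocycle hsymm
end
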